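/- Let (S,d) be a geodesic δ-hyperbolic metric space with basepoint e, and let {p_n}, {q_n}, {r_n}, {s_n} be sequences in S tending to four pairwise distinct points p,q,r,s of the Gromov boundary ∂S. For each n fix geodesic segments [p_n,q_n] and [r_n,s_n], and choose points a_n ∈ [p_n,q_n] and b_n ∈ [r_n,s_n] with d(e,a_n) = d(e,[p_n,q_n]) and d(e,b_n) = d(e,[r_n,s_n]). Then there exists N such that for all m,n ≥ N and every choice of geodesic segments [a_m,b_m] and [a_n,b_n], the segment [a_m,b_m] is contained in the 92δ-neighborhood of [a_n,b_n]. -/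

import Mathlib

/-- A geodesic segment from `u` to `v`: the image of an isometric embedding of
`[0, dist u v]` sending the endpoints to `u` and `v`. -/
def IsGeodesicSegment {S : Type*} [MetricSpace S] (Γ : Set S) (u v : S) : Prop :=
  ∃ γ : ℝ → S, γ 0 = u ∧ γ (dist u v) = v ∧
    (∀ s ∈ Set.Icc (0 : ℝ) (dist u v), ∀ t ∈ Set.Icc (0 : ℝ) (dist u v),
      dist (γ s) (γ t) = |s - t|) ∧
    Γ = γ '' Set.Icc (0 : ℝ) (dist u v)

/-- A geodesic metric space: every pair of points is joined by a geodesic segment. -/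
def GeodesicSpace (S : Type*) [MetricSpace S] : Prop :=
  ∀ u v : S, ∃ Γ : Set S, IsGeodesicSegment Γ u v

/-- `δ`-hyperbolicity: every geodesic triangle is `δ`-slim. -/
def DeltaHyperbolic (S : Type*) [MetricSpace S] (δ : ℝ) : Prop :=
  ∀ x y z : S, ∀ Γ₁ Γ₂ Γ₃ : Set S,
    IsGeodesicSegment Γ₁ x y → IsGeodesicSegment Γ₂ y z → IsGeodesicSegment Γ₃ z x →
    ∀ p ∈ Γ₁, Metric.infDist p (Γ₂ ∪ Γ₃) ≤ δ

/-- The Gromov product of `x` and `y` with respect to the basepoint `e`. -/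
noncomputable def gprod {S : Type*} [MetricSpace S] (e x y : S) : ℝ :=
  (dist x e + dist y e - dist x y) / 2

/-- A sequence converges to infinity if its pairwise Gromov products tend to infinity. -/
def ConvToInfty {S : Type*} [MetricSpace S] (e : S) (s : ℕ → S) : Prop :=
  Filter.Tendsto (fun p : ℕ × ℕ => gprod e (s p.1) (s p.2)) Filter.atTop Filter.atTop

/-- The type of sequences in `S` converging to infinity. -/
def BSeq (S : Type*) [MetricSpace S] (e : S) := {s : ℕ → S // ConvToInfty e s}

/-- Two sequences converging to infinity are equivalent if their mutual Gromov
products tend to infinity. -/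
def bequiv {S : Type*} [MetricSpace S] (e : S) (s t : BSeq S e) : Prop :=
  Filter.Tendsto (fun n => gprod e (s.1 n) (t.1 n)) Filter.atTop Filter.atTop

/-- The Gromov boundary of `S` with respect to the basepoint `e`. -/
def GBoundary (S : Type*) [MetricSpace S] (e : S) := Quot (bequiv (S := S) e)

/-- A sequence in `S` tends to the boundary point `x`. -/
def TendstoBd {S : Type*} [MetricSpace S] (e : S) (s : ℕ → S) (x : GBoundary S e) : Prop :=
  ∃ h : ConvToInfty e s, Quot.mk _ (⟨s, h⟩ : BSeq S e) = x

/-!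
Write `(x·y)` for the Gromov product based at `e`. Slimness of triangles gives
`(x·y) ≤ d(e,[x,y]) ≤ (x·y) + 2δ`, whence the four-point inequality
`(x·z) ≥ min (x·y) (y·z) - 3δ`.

As `p ≠ q`, the products `(p_n·q_n)` do not tend to infinity, while `(p_m·p_n)` and `(q_m·q_n)` do;
the four-point inequality along `p_k, p_n, q_n, q_k` shows that `(p_n·q_n)` is eventually bounded.
So for large `m, n` the segments `[p_m,q_m]` and `[p_n,q_n]` fellow travel near `e`: their Gromov
products differ by at most `6δ`. Since `(a_n·p_n) ≥ (p_n·q_n)`, comparing along `a_m, p_m, p_n, a_n`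
bounds `(a_m·a_n)` from below and yields `d(a_m,a_n) ≤ 22δ`. The same holds for `b`, and a geodesic
quadrilateral is `2δ`-slim.
-/

section

open Filter Metric

variable {S : Type*} [MetricSpace S] {δ : ℝ}

namespace IsGeodesicSegment

variable {Γ : Set S} {u v z : S}

lemma singleton (x : S) : IsGeodesicSegment {x} x x :=
  ⟨fun _ => x, rfl, rfl, by simp, by simp⟩

lemma symm (h : IsGeodesicSegment Γ u v) : IsGeodesicSegment Γ v u := by
  obtain ⟨γ, h_zero, h_dist, h_isom, rfl⟩ := h
  rw [IsGeodesicSegment, dist_comm v u]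
  refine ⟨fun t => γ (dist u v - t), by simpa using h_dist, by simpa using h_zero,
    fun s hs t ht => ?_, ?_⟩
  · rw [h_isom _ ⟨by linarith [hs.2], by linarith [hs.1]⟩ _
      ⟨by linarith [ht.2], by linarith [ht.1]⟩, sub_sub_sub_cancel_left, abs_sub_comm]
  · rw [← Set.image_image γ (dist u v - ·), Set.image_const_sub_Icc, sub_self, sub_zero]

lemma left_mem (h : IsGeodesicSegment Γ u v) : u ∈ Γ := by
  obtain ⟨γ, h_zero, -, -, rfl⟩ := h
  exact ⟨0, ⟨le_rfl, dist_nonneg⟩, h_zero⟩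

lemma right_mem (h : IsGeodesicSegment Γ u v) : v ∈ Γ := h.symm.left_mem

lemma dist_add_dist (h : IsGeodesicSegment Γ u v) (hz : z ∈ Γ) :
    dist u z + dist z v = dist u v := by
  obtain ⟨γ, h_zero, h_dist, h_isom, rfl⟩ := h
  obtain ⟨t, ht, rfl⟩ := hz
  have h_left : dist u (γ t) = t := by
    simpa [h_zero, abs_of_nonneg ht.1] using h_isom 0 ⟨le_rfl, dist_nonneg⟩ t ht
  have h_right : dist (γ t) v = dist u v - t := by
    simpa [h_dist, abs_sub_comm t, abs_of_nonneg (sub_nonneg.2 ht.2)] using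
      h_isom t ht (dist u v) ⟨dist_nonneg, le_rfl⟩
  rw [h_left, h_right, add_sub_cancel]

lemma exists_continuousOn_image_eq (h : IsGeodesicSegment Γ u v) :
    ∃ γ : ℝ → S, ContinuousOn γ (Set.Icc 0 (dist u v)) ∧ γ '' Set.Icc 0 (dist u v) = Γ := by
  obtain ⟨γ, -, -, h_isom, rfl⟩ := h
  have h_lip : LipschitzOnWith 1 γ (Set.Icc 0 (dist u v)) :=
    .of_dist_le_mul fun s hs t ht => by simp [h_isom s hs t ht, Real.dist_eq]
  exact ⟨γ, h_lip.continuousOn, rfl⟩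

lemma isCompact (h : IsGeodesicSegment Γ u v) : IsCompact Γ := by
  obtain ⟨γ, hγ, rfl⟩ := h.exists_continuousOn_image_eq
  exact isCompact_Icc.image_of_continuousOn hγ

lemma isPreconnected (h : IsGeodesicSegment Γ u v) : IsPreconnected Γ := by
  obtain ⟨γ, hγ, rfl⟩ := h.exists_continuousOn_image_eq
  exact isPreconnected_Icc.image γ hγ

lemma exists_dist_eq_infDist (h : IsGeodesicSegment Γ u v) (x : S) :
    ∃ w ∈ Γ, dist x w = infDist x Γ := by
  obtain ⟨w, hw, hxw⟩ := h.isCompact.exists_infDist_eq_dist ⟨u, h.left_mem⟩ x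
  exact ⟨w, hw, hxw.symm⟩

end IsGeodesicSegment

lemma gprod_comm (e x y : S) : gprod e x y = gprod e y x := by
  rw [gprod, gprod, dist_comm x y, add_comm (dist x e)]

lemma IsGeodesicSegment.gprod_le_infDist {Γ : Set S} {x y : S} (h : IsGeodesicSegment Γ x y)
    (e : S) : gprod e x y ≤ infDist e Γ := by
  refine (le_infDist ⟨x, h.left_mem⟩).2 fun w hw => ?_
  have hx := dist_triangle x w e
  have hy := dist_triangle_left y e w
  rw [gprod, ← h.dist_add_dist hw]
  linarith [dist_comm w e]

lemma IsGeodesicSegment.gprod_le_gprod_left {Γ : Set S} {x y a : S}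
    (h : IsGeodesicSegment Γ x y) (ha : a ∈ Γ) (e : S) : gprod e x y ≤ gprod e x a := by
  have := dist_triangle_left y e a
  rw [gprod, gprod, ← h.dist_add_dist ha]
  linarith

namespace DeltaHyperbolic

lemma nonneg (hhyp : DeltaHyperbolic S δ) (x : S) : 0 ≤ δ :=
  have hx := IsGeodesicSegment.singleton x
  infDist_nonneg.trans (hhyp x x x _ _ _ hx hx hx x rfl)

lemma exists_mem_union_dist_le {x y z w : S} {A B C : Set S} (hhyp : DeltaHyperbolic S δ)
    (hA : IsGeodesicSegment A x y) (hB : IsGeodesicSegment B y z) (hC : IsGeodesicSegment C z x)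
    (hw : w ∈ A) : ∃ u ∈ B ∪ C, dist w u ≤ δ := by
  obtain ⟨u, hu, hwu⟩ := (hB.isCompact.union hC.isCompact).exists_infDist_eq_dist
    ⟨y, Or.inl hB.left_mem⟩ w
  exact ⟨u, hu, hwu ▸ hhyp x y z A B C hA hB hC w hw⟩

lemma exists_dist_le_and_exists_dist_le {x y z : S} {A B C : Set S} (hhyp : DeltaHyperbolic S δ)
    (hA : IsGeodesicSegment A x y) (hB : IsGeodesicSegment B y z)
    (hC : IsGeodesicSegment C z x) :
    ∃ w ∈ A, (∃ u ∈ B, dist w u ≤ δ) ∧ ∃ v ∈ C, dist w v ≤ δ := by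
  -- The closed `δ`-neighborhoods of `B` and `C` cover the connected side `A`, so they meet on it.
  have h_cover : A ⊆ {w | infDist w B ≤ δ} ∪ {w | infDist w C ≤ δ} := fun w hw => by
    obtain ⟨u, hu | hu, hwu⟩ := hhyp.exists_mem_union_dist_le hA hB hC hw
    · exact .inl ((infDist_le_dist_of_mem hu).trans hwu)
    · exact .inr ((infDist_le_dist_of_mem hu).trans hwu)
  have hyB : infDist y B ≤ δ := (infDist_zero_of_mem hB.left_mem).trans_le (hhyp.nonneg y)
  have hxC : infDist x C ≤ δ := (infDist_zero_of_mem hC.right_mem).trans_le (hhyp.nonneg x)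
  obtain ⟨w, hw, hwB, hwC⟩ := isPreconnected_closed_iff.1 hA.isPreconnected _ _
    (isClosed_le (continuous_infDist_pt B) continuous_const)
    (isClosed_le (continuous_infDist_pt C) continuous_const)
    h_cover ⟨y, hA.right_mem, hyB⟩ ⟨x, hA.left_mem, hxC⟩
  obtain ⟨u, hu, hwu⟩ := hB.exists_dist_eq_infDist w
  obtain ⟨v, hv, hwv⟩ := hC.exists_dist_eq_infDist w
  exact ⟨w, hw, ⟨u, hu, hwu.trans_le hwB⟩, v, hv, hwv.trans_le hwC⟩

lemma infDist_le_gprod_add {Γ : Set S} {x y : S} (hhyp : DeltaHyperbolic S δ)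
    (hgeo : GeodesicSpace S) (h : IsGeodesicSegment Γ x y) (e : S) :
    infDist e Γ ≤ gprod e x y + 2 * δ := by
  obtain ⟨A, hA⟩ := hgeo y e
  obtain ⟨B, hB⟩ := hgeo e x
  obtain ⟨w, hw, ⟨u, hu, hwu⟩, v, hv, hwv⟩ := hhyp.exists_dist_le_and_exists_dist_le h hA hB
  have h_via_u : dist y w + dist e w ≤ dist y e + 2 * δ := by
    linarith [hA.dist_add_dist hu, dist_triangle_right y w u, dist_triangle_right e w u,
      dist_comm u e]
  have h_via_v : dist x w + dist e w ≤ dist x e + 2 * δ := by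
    linarith [hB.dist_add_dist hv, dist_triangle_right x w v, dist_triangle_right e w v,
      dist_comm v x, dist_comm e x]
  rw [gprod, ← h.dist_add_dist hw]
  linarith [infDist_le_dist_of_mem (x := e) hw, dist_comm w y]

lemma min_gprod_le (hhyp : DeltaHyperbolic S δ) (hgeo : GeodesicSpace S) (e x y z : S) :
    min (gprod e x y) (gprod e y z) ≤ gprod e x z + 3 * δ := by
  obtain ⟨A, hA⟩ := hgeo x z
  obtain ⟨B, hB⟩ := hgeo z y
  obtain ⟨C, hC⟩ := hgeo y x
  obtain ⟨w, hw, hew⟩ := hA.exists_dist_eq_infDist e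
  obtain ⟨u, hu, hwu⟩ := hhyp.exists_mem_union_dist_le hA hB hC hw
  have h_min_le : min (gprod e x y) (gprod e y z) ≤ dist e u := by
    rw [gprod_comm e x y, gprod_comm e y z]
    rcases hu with hu | hu
    · exact (min_le_right _ _).trans ((hB.gprod_le_infDist e).trans (infDist_le_dist_of_mem hu))
    · exact (min_le_left _ _).trans ((hC.gprod_le_infDist e).trans (infDist_le_dist_of_mem hu))
  linarith [hhyp.infDist_le_gprod_add hgeo hA e, dist_triangle e w u]

lemma le_gprod_add_of_le_of_le_of_le {e x y z w : S} {c : ℝ} (hhyp : DeltaHyperbolic S δ)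
    (hgeo : GeodesicSpace S) (hxy : c ≤ gprod e x y) (hyz : c ≤ gprod e y z)
    (hzw : c ≤ gprod e z w) : c ≤ gprod e x w + 6 * δ := by
  have hxz : c - 3 * δ ≤ gprod e x z := by
    linarith [le_min hxy hyz, hhyp.min_gprod_le hgeo e x y z]
  have hzw' : c - 3 * δ ≤ gprod e z w := by linarith [hhyp.nonneg e]
  linarith [le_min hxz hzw', hhyp.min_gprod_le hgeo e x z w]

lemma dist_nearest_le {e x y x' y' a a' : S} {Γ Γ' : Set S} {c : ℝ}
    (hhyp : DeltaHyperbolic S δ) (hgeo : GeodesicSpace S)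
    (hΓ : IsGeodesicSegment Γ x y) (hΓ' : IsGeodesicSegment Γ' x' y')
    (ha : a ∈ Γ ∧ dist e a = infDist e Γ) (ha' : a' ∈ Γ' ∧ dist e a' = infDist e Γ')
    (hxy : gprod e x y ≤ c) (hxy' : gprod e x' y' ≤ c)
    (hxx' : c ≤ gprod e x x') (hyy' : c ≤ gprod e y y') : dist a a' ≤ 22 * δ := by
  wlog hle : gprod e x y ≤ gprod e x' y' generalizing x y x' y' a a' Γ Γ'
  · rw [dist_comm]
    exact this hΓ' hΓ ha' ha hxy' hxy (gprod_comm e x x' ▸ hxx') (gprod_comm e y y' ▸ hyy')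
      (not_le.1 hle).le
  have h_products : gprod e x' y' ≤ gprod e x y + 6 * δ :=
    hhyp.le_gprod_add_of_le_of_le_of_le hgeo (hxy'.trans hxx') le_rfl
      (gprod_comm e y y' ▸ hxy'.trans hyy')
  have h_nearest : gprod e x y ≤ gprod e a a' + 6 * δ :=
    hhyp.le_gprod_add_of_le_of_le_of_le hgeo
      (gprod_comm e x a ▸ hΓ.gprod_le_gprod_left ha.1 e) (hxy.trans hxx')
      (hle.trans (hΓ'.gprod_le_gprod_left ha'.1 e))
  have h_dist : dist a a' = dist e a + dist e a' - 2 * gprod e a a' := by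
    rw [gprod, dist_comm a e, dist_comm a' e]
    ring
  linarith [ha.2, ha'.2, hhyp.infDist_le_gprod_add hgeo hΓ e,
    hhyp.infDist_le_gprod_add hgeo hΓ' e]

lemma infDist_le_of_dist_endpoints_le {D : ℝ} {a b a' b' z : S} {E F : Set S}
    (hhyp : DeltaHyperbolic S δ) (hgeo : GeodesicSpace S)
    (hE : IsGeodesicSegment E a b) (hF : IsGeodesicSegment F a' b')
    (ha : dist a a' ≤ D) (hb : dist b b' ≤ D) (hz : z ∈ E) : infDist z F ≤ D + 2 * δ := by
  obtain ⟨A, hA⟩ := hgeo a' a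
  obtain ⟨B, hB⟩ := hgeo b' b
  obtain ⟨C, hC⟩ := hgeo b a'
  suffices h : ∃ w ∈ F, dist z w ≤ D + 2 * δ by
    obtain ⟨w, hw, hzw⟩ := h
    exact (infDist_le_dist_of_mem hw).trans hzw
  have hδ := hhyp.nonneg z
  have hD : 0 ≤ D := dist_nonneg.trans ha
  obtain ⟨u, hu | hu, hzu⟩ := hhyp.exists_mem_union_dist_le hE hC hA hz
  · obtain ⟨v, hv | hv, huv⟩ := hhyp.exists_mem_union_dist_le hC hF hB hu
    · exact ⟨v, hv, by linarith [dist_triangle z u v]⟩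
    · refine ⟨b', hF.right_mem, ?_⟩
      linarith [hB.dist_add_dist hv, dist_triangle z u b', dist_triangle_right u b' v,
        dist_comm b b', dist_nonneg (x := v) (y := b)]
  · refine ⟨a', hF.left_mem, ?_⟩
    linarith [hA.dist_add_dist hu, dist_triangle_right z a' u, dist_comm a a',
      dist_nonneg (x := u) (y := a)]

lemma isBoundedUnder_gprod {e : S} {x y : ℕ → S} {p q : GBoundary S e}
    (hhyp : DeltaHyperbolic S δ) (hgeo : GeodesicSpace S)
    (hp : TendstoBd e x p) (hq : TendstoBd e y q) (hpq : p ≠ q) :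
    IsBoundedUnder (· ≤ ·) atTop fun n => gprod e (x n) (y n) := by
  obtain ⟨hx, rfl⟩ := hp
  obtain ⟨hy, rfl⟩ := hq
  have h_not_tendsto : ¬ Tendsto (fun n => gprod e (x n) (y n)) atTop atTop :=
    fun h => hpq (Quot.sound h)
  obtain ⟨M, hM⟩ : ∃ M, ∃ᶠ k in atTop, gprod e (x k) (y k) < M := by
    simpa only [Filter.tendsto_atTop, not_forall, not_eventually, not_le] using h_not_tendsto
  rw [ConvToInfty, ← prod_atTop_atTop_eq] at hx hy
  obtain ⟨k, hk, hxk, hyk⟩ := (hM.and_eventually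
    ((hx.eventually_ge_atTop (M + 6 * δ)).curry.and
      (hy.eventually_ge_atTop (M + 6 * δ)).curry)).exists
  refine ⟨M + 6 * δ, eventually_map.2 ?_⟩
  filter_upwards [hxk, hyk] with n hxkn hykn
  by_contra! h_lt
  linarith [hhyp.le_gprod_add_of_le_of_le_of_le hgeo hxkn h_lt.le
    (gprod_comm e (y k) (y n) ▸ hykn)]

lemma eventually_dist_nearest_le {e : S} {x y : ℕ → S} {p q : GBoundary S e}
    {Γ : ℕ → Set S} {a : ℕ → S} (hhyp : DeltaHyperbolic S δ) (hgeo : GeodesicSpace S)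
    (hp : TendstoBd e x p) (hq : TendstoBd e y q) (hpq : p ≠ q)
    (hΓ : ∀ n, IsGeodesicSegment (Γ n) (x n) (y n))
    (ha : ∀ n, a n ∈ Γ n ∧ dist e (a n) = infDist e (Γ n)) :
    ∀ᶠ i : ℕ × ℕ in atTop, dist (a i.1) (a i.2) ≤ 22 * δ := by
  obtain ⟨M, hM⟩ := hhyp.isBoundedUnder_gprod hgeo hp hq hpq
  have hM_prod := (eventually_map.1 hM).prod_mk (eventually_map.1 hM)
  rw [prod_atTop_atTop_eq] at hM_prod
  filter_upwards [hp.1.eventually_ge_atTop M, hq.1.eventually_ge_atTop M, hM_prod]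
    with i hx hy hi
  exact hhyp.dist_nearest_le hgeo (hΓ i.1) (hΓ i.2) (ha i.1) (ha i.2) hi.1 hi.2 hx hy

end DeltaHyperbolic

theorem statement15_general (hgeo : GeodesicSpace S) (hhyp : DeltaHyperbolic S δ) {e : S}
    {pn qn rn sn : ℕ → S} {p q r s : GBoundary S e}
    (hp : TendstoBd e pn p) (hq : TendstoBd e qn q)
    (hr : TendstoBd e rn r) (hs : TendstoBd e sn s) (hpq : p ≠ q) (hrs : r ≠ s)
    {Γ Δ : ℕ → Set S}
    (hΓ : ∀ n, IsGeodesicSegment (Γ n) (pn n) (qn n))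
    (hΔ : ∀ n, IsGeodesicSegment (Δ n) (rn n) (sn n))
    {a b : ℕ → S}
    (ha : ∀ n, a n ∈ Γ n ∧ dist e (a n) = infDist e (Γ n))
    (hb : ∀ n, b n ∈ Δ n ∧ dist e (b n) = infDist e (Δ n)) :
    ∃ N : ℕ, ∀ m n : ℕ, N ≤ m → N ≤ n → ∀ E F : Set S,
      IsGeodesicSegment E (a m) (b m) → IsGeodesicSegment F (a n) (b n) →
      ∀ z ∈ E, infDist z F ≤ 24 * δ := by
  have h_close := (hhyp.eventually_dist_nearest_le hgeo hp hq hpq hΓ ha).and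
    (hhyp.eventually_dist_nearest_le hgeo hr hs hrs hΔ hb)
  obtain ⟨N, hN⟩ := eventually_atTop_prod_self.1 h_close
  refine ⟨N, fun m n hm hn E F hE hF z hz => ?_⟩
  obtain ⟨h_dist_a, h_dist_b⟩ := hN m n hm hn
  linarith [hhyp.infDist_le_of_dist_endpoints_le hgeo hE hF h_dist_a h_dist_b hz]

end

/-- Let sequences `p_n, q_n, r_n, s_n` tend to four pairwise distinct
boundary points, let `a_n ∈ [p_n,q_n]` and `b_n ∈ [r_n,s_n]` realize the distance to the
basepoint. Then for large `m, n`, every geodesic `[a_m,b_m]` lies in the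
`92δ`-neighborhood of every geodesic `[a_n,b_n]`. -/
theorem statement15 {S : Type*} [MetricSpace S] (δ : ℝ) (hδ : 0 ≤ δ)
    (hgeo : GeodesicSpace S) (hhyp : DeltaHyperbolic S δ) (e : S)
    (pn qn rn sn : ℕ → S) (p q r s : GBoundary S e)
    (hp : TendstoBd e pn p) (hq : TendstoBd e qn q)
    (hr : TendstoBd e rn r) (hs : TendstoBd e sn s)
    (hpq : p ≠ q) (hpr : p ≠ r) (hps : p ≠ s) (hqr : q ≠ r) (hqs : q ≠ s) (hrs : r ≠ s)
    (Γ Δ : ℕ → Set S)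
    (hΓ : ∀ n, IsGeodesicSegment (Γ n) (pn n) (qn n))
    (hΔ : ∀ n, IsGeodesicSegment (Δ n) (rn n) (sn n))
    (a b : ℕ → S)
    (ha : ∀ n, a n ∈ Γ n ∧ dist e (a n) = Metric.infDist e (Γ n))
    (hb : ∀ n, b n ∈ Δ n ∧ dist e (b n) = Metric.infDist e (Δ n)) :
    ∃ N : ℕ, ∀ m n : ℕ, N ≤ m → N ≤ n → ∀ E F : Set S,
      IsGeodesicSegment E (a m) (b m) → IsGeodesicSegment F (a n) (b n) →
      ∀ z ∈ E, Metric.infDist z F ≤ 92 * δ := by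
  obtain ⟨N, hN⟩ := statement15_general hgeo hhyp hp hq hr hs hpq hrs hΓ hΔ ha hb
  exact ⟨N, fun m n hm hn E F hE hF z hz => (hN m n hm hn E F hE hF z hz).trans (by linarith)⟩
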